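/- Let h > 0, b_0 > 0, and let u_0 ∈ W^{1,∞}(0,∞) satisfy u_0 ≥ 0, u_0(0) > 0, and u_0 = 0 on [b_0, ∞). Let (u, s) be the classical solution of the one-phase Stefan problem (NSP), let ω > 0 be the unique positive root of h = (x/2)·e^{x²/4}, and let U(η) = h·∫_η^ω e^{−s²/4} ds. Then: (1) s(t)/√(t+1) → ω as t → ∞; and (2) sup over x with x/√(t+1) ∈ [0, ω] of |u(x,t) − U(x/√(t+1))| → 0 as t → ∞, where u is extended by zero for x > s(t). -/

import Mathlib

/-- `(u, s)` is a classical solution of the one-phase Stefan problem (NSP). -/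
def IsClassicalSolNSP (h b0 : ℝ) (u0 : ℝ → ℝ) (u : ℝ → ℝ → ℝ) (s : ℝ → ℝ) : Prop :=
  ContDiffOn ℝ 1 s (Set.Ici 0) ∧ s 0 = b0 ∧
  ContinuousOn (fun p : ℝ × ℝ => u p.1 p.2)
    {p : ℝ × ℝ | 0 ≤ p.2 ∧ 0 ≤ p.1 ∧ p.1 ≤ s p.2} ∧
  ContinuousOn (fun p : ℝ × ℝ => deriv (fun y => u y p.2) p.1)
    {p : ℝ × ℝ | 0 < p.2 ∧ 0 ≤ p.1 ∧ p.1 ≤ s p.2} ∧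
  ContinuousOn (fun p : ℝ × ℝ => deriv (deriv (fun y => u y p.2)) p.1)
    {p : ℝ × ℝ | 0 < p.2 ∧ 0 < p.1 ∧ p.1 < s p.2} ∧
  ContinuousOn (fun p : ℝ × ℝ => deriv (fun t => u p.1 t) p.2)
    {p : ℝ × ℝ | 0 < p.2 ∧ 0 < p.1 ∧ p.1 < s p.2} ∧
  (∀ t > (0:ℝ), ∀ x, 0 < x → x < s t →
    DifferentiableAt ℝ (fun τ => u x τ) t ∧
    DifferentiableAt ℝ (fun y => u y t) x ∧
    DifferentiableAt ℝ (deriv (fun y => u y t)) x ∧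
    deriv (fun τ => u x τ) t = deriv (deriv (fun y => u y t)) x) ∧
  (∀ t > (0:ℝ), -deriv (fun y => u y t) 0 = h / Real.sqrt (t + 1)) ∧
  (∀ t > (0:ℝ), u (s t) t = 0) ∧
  (∀ t > (0:ℝ), deriv s t = -deriv (fun y => u y t) (s t)) ∧
  (∀ x, 0 < x → x < b0 → u x 0 = u0 x)

open Set Filter Topology

/-- Gaussian primitive. -/
noncomputable def EE (y : ℝ) : ℝ := ∫ σ in (0:ℝ)..y, Real.exp (-σ ^ 2 / 4)

lemma EE_hasDerivAt (y : ℝ) : HasDerivAt EE (Real.exp (-y ^ 2 / 4)) y := by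
  have hc : Continuous (fun σ : ℝ => Real.exp (-σ ^ 2 / 4)) := by fun_prop
  exact intervalIntegral.integral_hasDerivAt_right (hc.intervalIntegrable _ _)
    (hc.stronglyMeasurableAtFilter _ _) hc.continuousAt

lemma EE_cont : Continuous EE :=
  continuous_iff_continuousAt.2 fun y => (EE_hasDerivAt y).continuousAt

lemma EE_mono : Monotone EE :=
  monotone_of_deriv_nonneg (fun y => (EE_hasDerivAt y).differentiableAt)
    (fun y => by rw [(EE_hasDerivAt y).deriv]; positivity)

lemma EE_lip {a b : ℝ} (hab : a ≤ b) : EE b - EE a ≤ b - a := by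
  have : Monotone (fun y => y - EE y) := by
    refine monotone_of_deriv_nonneg (fun y => ((hasDerivAt_id y).sub (EE_hasDerivAt y)).differentiableAt) (fun y => ?_)
    have h1 := ((hasDerivAt_id y).sub (EE_hasDerivAt y)).deriv
    have h2 : deriv (fun y => y - EE y) y = 1 - Real.exp (-y ^ 2 / 4) := h1
    rw [h2]
    have : Real.exp (-y ^ 2 / 4) ≤ 1 := Real.exp_le_one_iff.2 (by nlinarith [sq_nonneg y])
    linarith
  have := this hab
  simp only at this
  linarith

lemma EE_integral (a b : ℝ) : ∫ σ in a..b, Real.exp (-σ ^ 2 / 4) = EE b - EE a := by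
  have hc : Continuous (fun σ : ℝ => Real.exp (-σ ^ 2 / 4)) := by fun_prop
  rw [EE, EE, intervalIntegral.integral_interval_sub_left (hc.intervalIntegrable _ _) (hc.intervalIntegrable _ _)]

lemma left_deriv_nonneg {f : ℝ → ℝ} {d a c : ℝ} (hca : c < a)
    (hf : HasDerivWithinAt f d (Iic a) a) (hle : ∀ y, c < y → y < a → f y ≤ f a) : 0 ≤ d := by
  have h1 : HasDerivWithinAt f d (Iio a) a := hf.mono Iio_subset_Iic_self
  rw [hasDerivWithinAt_iff_tendsto_slope' (by simp)] at h1
  refine ge_of_tendsto h1 ?_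
  filter_upwards [Ioo_mem_nhdsLT hca] with y hy
  rw [slope_def_field]
  exact div_nonneg_of_nonpos (by linarith [hle y hy.1 hy.2]) (by linarith [hy.2])

lemma right_deriv_nonpos {f : ℝ → ℝ} {d a c : ℝ} (hca : a < c)
    (hf : HasDerivAt f d a) (hle : ∀ y, a < y → y < c → f y ≤ f a) : d ≤ 0 := by
  have h1 : HasDerivWithinAt f d (Ioi a) a := hf.hasDerivWithinAt
  rw [hasDerivWithinAt_iff_tendsto_slope' (by simp)] at h1
  refine le_of_tendsto h1 ?_
  filter_upwards [Ioo_mem_nhdsGT hca] with y hy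
  rw [slope_def_field]
  exact div_nonpos_of_nonpos_of_nonneg (by linarith [hle y hy.1 hy.2]) (by linarith [hy.1])

lemma second_deriv_nonpos {f g : ℝ → ℝ} {b x : ℝ} (hf : ∀ᶠ y in 𝓝 x, HasDerivAt f (g y) y)
    (hg : HasDerivAt g b x) (hmax : IsLocalMax f x) : b ≤ 0 := by
  by_contra! hb
  have hde : deriv f =ᶠ[𝓝 x] g := hf.mono fun y hy => hy.deriv
  have hdd : deriv (deriv f) x = b := by rw [hde.deriv_eq]; exact hg.deriv
  have hmin := isLocalMin_of_deriv_deriv_pos (by rw [hdd]; exact hb) hmax.deriv_eq_zero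
    hf.self_of_nhds.continuousAt
  have hconst : f =ᶠ[𝓝 x] fun _ => f x := by
    filter_upwards [hmax, hmin] with y h1 h2 using le_antisymm h1 h2
  have h0 : deriv f =ᶠ[𝓝 x] fun _ => 0 := by
    filter_upwards [hconst.eventuallyEq_nhds] with y hy
    rw [hy.deriv_eq]; simp
  have : deriv (deriv f) x = 0 := by rw [h0.deriv_eq]; simp
  linarith

/-- weak maximum principle -/
lemma max_principle {T : ℝ} (r : ℝ → ℝ) (w : ℝ → ℝ → ℝ)
    (hr : ContinuousOn r (Icc 0 T)) (hrpos : ∀ t ∈ Icc 0 T, 0 < r t)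
    (hw : ContinuousOn (fun p : ℝ × ℝ => w p.1 p.2)
      {p : ℝ × ℝ | (0 ≤ p.2 ∧ p.2 ≤ T) ∧ 0 ≤ p.1 ∧ p.1 ≤ r p.2})
    (hinit : ∀ x, 0 ≤ x → x ≤ r 0 → w x 0 ≤ 0)
    (hlat : ∀ t, 0 < t → t ≤ T → w (r t) t ≤ 0)
    (hneu : ∀ t, 0 < t → t ≤ T → ∃ d > 0, HasDerivAt (fun y => w y t) d 0)
    (hint : ∀ t, 0 < t → t ≤ T → ∀ x, 0 < x → x < r t → ∃ a b : ℝ, ∃ g : ℝ → ℝ,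
      HasDerivAt (fun τ => w x τ) a t ∧ (∀ᶠ y in 𝓝 x, HasDerivAt (fun y => w y t) (g y) y) ∧
      HasDerivAt g b x ∧ a < b) :
    ∀ t, 0 ≤ t → t ≤ T → ∀ x, 0 ≤ x → x ≤ r t → w x t ≤ 0 := by
  set D : Set (ℝ × ℝ) := {p : ℝ × ℝ | (0 ≤ p.2 ∧ p.2 ≤ T) ∧ 0 ≤ p.1 ∧ p.1 ≤ r p.2} with hD
  have hcomp : IsCompact D := by
    have hK : IsCompact (Icc (0:ℝ) 1 ×ˢ Icc (0:ℝ) T) := isCompact_Icc.prod isCompact_Icc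
    have hcont : ContinuousOn (fun q : ℝ × ℝ => (q.1 * r q.2, q.2)) (Icc (0:ℝ) 1 ×ˢ Icc (0:ℝ) T) := by
      refine ContinuousOn.prodMk (continuousOn_fst.mul ?_) continuousOn_snd
      exact hr.comp continuousOn_snd (fun q hq => hq.2)
    have := hK.image_of_continuousOn hcont
    convert this using 1
    ext ⟨x, t⟩
    simp only [hD, mem_ofPred_eq, mem_image, Prod.exists, mem_prod, mem_Icc, Prod.mk.injEq]
    constructor
    · rintro ⟨ht, hx0, hx1⟩
      have hp := hrpos t ht
      exact ⟨x / r t, t, ⟨⟨by positivity, (div_le_one hp).2 hx1⟩, ht⟩, by field_simp, rfl⟩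
    · rintro ⟨y, t', ⟨⟨hy0, hy1⟩, ht⟩, hx, rfl⟩
      have hp := hrpos t' ht
      subst hx
      exact ⟨ht, by positivity, by nlinarith⟩
  intro t1 ht1 ht1T x1 hx1 hx1r
  have hmem1 : (x1, t1) ∈ D := ⟨⟨ht1, ht1T⟩, hx1, hx1r⟩
  obtain ⟨⟨x, t⟩, hxt, hmax⟩ := hcomp.exists_isMaxOn ⟨_, hmem1⟩ hw
  have hmax' : ∀ y τ, 0 ≤ τ → τ ≤ T → 0 ≤ y → y ≤ r τ → w y τ ≤ w x t := fun y τ a b c d =>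
    hmax (show (y, τ) ∈ D from ⟨⟨a, b⟩, c, d⟩)
  by_contra! hcon
  have hpos : 0 < w x t := hcon.trans_le (hmax' _ _ ht1 ht1T hx1 hx1r)
  obtain ⟨⟨ht0, htT⟩, hx0, hxr⟩ := hxt
  simp only at ht0 htT hx0 hxr
  rcases ht0.eq_or_lt with h0 | ht0
  · subst h0; linarith [hinit x hx0 hxr]
  rcases hxr.eq_or_lt with h0 | hxr
  · subst h0; linarith [hlat t ht0 htT]
  rcases hx0.eq_or_lt with h0 | hx0
  · subst h0
    obtain ⟨d, hd, hder⟩ := hneu t ht0 htT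
    have := right_deriv_nonpos (c := r t) hxr hder (fun y hy hy' => hmax' y t ht0.le htT hy.le hy'.le)
    linarith
  obtain ⟨a, b, g, ha, hg, hb, hab⟩ := hint t ht0 htT x hx0 hxr
  have hb0 : b ≤ 0 := by
    refine second_deriv_nonpos hg hb ?_
    filter_upwards [Ioo_mem_nhds hx0 hxr] with y hy using hmax' y t ht0.le htT hy.1.le hy.2.le
  have hrt : ContinuousWithinAt r (Icc 0 T) t := hr t ⟨ht0.le, htT⟩
  have hev : ∀ᶠ τ in 𝓝[<] t, x < r τ := by
    have h1 : ∀ᶠ τ in 𝓝[Icc 0 T] t, x < r τ := hrt.eventually (lt_mem_nhds hxr)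
    have h2 : 𝓝[<] t ≤ 𝓝[Icc 0 T] t := by
      rw [← nhdsWithin_Ioo_eq_nhdsLT ht0]
      exact nhdsWithin_mono _ (fun z hz => ⟨hz.1.le, hz.2.le.trans htT⟩)
    exact h2 h1
  have hev2 := hev.and (Ioo_mem_nhdsLT ht0)
  obtain ⟨c, hct, hc⟩ := (mem_nhdsLT_iff_exists_Ioo_subset).1 hev2
  have ha0 : 0 ≤ a := by
    refine left_deriv_nonneg hct ha.hasDerivWithinAt (fun τ h1 h2 => ?_)
    have := hc ⟨h1, h2⟩
    exact hmax' x τ this.2.1.le (h2.le.trans htT) hx0.le this.1.le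
  linarith

/-- barrier -/
noncomputable def vv (lam k : ℝ) (sg : ℝ → ℝ) (x t : ℝ) : ℝ :=
  lam * (EE (sg t) - EE (x / Real.sqrt (t + 1))) + k * ((sg t) ^ 2 - x ^ 2 / (t + 1)) / 2

/-- x-derivative -/
noncomputable def vx (lam k x t : ℝ) : ℝ :=
  -(lam * Real.exp (-(x / Real.sqrt (t + 1)) ^ 2 / 4)) / Real.sqrt (t + 1) - k * x / (t + 1)

lemma vv_x (lam k : ℝ) (sg : ℝ → ℝ) (x t : ℝ) :
    HasDerivAt (fun y => vv lam k sg y t) (vx lam k x t) x := by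
  unfold vv vx
  have h1 : HasDerivAt (fun y : ℝ => y / Real.sqrt (t+1)) (1 / Real.sqrt (t+1)) x :=
    (hasDerivAt_id x).div_const _
  have h2 := (EE_hasDerivAt (x / Real.sqrt (t+1))).comp x h1
  have h3 := ((h2.const_sub (EE (sg t))).const_mul lam).add
    (((((hasDerivAt_pow 2 x).div_const (t+1)).const_sub ((sg t)^2)).const_mul k).div_const 2)
  refine h3.congr_deriv ?_
  push_cast
  ring

lemma vv_xx (lam k x t : ℝ) (ht : 0 ≤ t) :
    HasDerivAt (fun y => vx lam k y t)
      ((lam * Real.exp (-(x / Real.sqrt (t + 1)) ^ 2 / 4) * (x / Real.sqrt (t + 1)) / 2 - k) / (t + 1)) x := by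
  unfold vx
  have h1 : HasDerivAt (fun y : ℝ => y / Real.sqrt (t+1)) (1 / Real.sqrt (t+1)) x :=
    (hasDerivAt_id x).div_const _
  have h2 : HasDerivAt (fun y : ℝ => Real.exp (-(y / Real.sqrt (t+1)) ^ 2 / 4))
      (Real.exp (-(x / Real.sqrt (t+1)) ^ 2 / 4) * (-(2 * (x / Real.sqrt (t+1)) * (1 / Real.sqrt (t+1))) / 4)) x := by
    refine (((h1.pow 2).neg.div_const 4).exp).congr_deriv ?_
    simp
  have h3 := (((h2.const_mul lam).neg).div_const (Real.sqrt (t+1))).sub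
    (((hasDerivAt_id x).const_mul k).div_const (t+1))
  refine h3.congr_deriv ?_
  have hs : Real.sqrt (t+1) ^ 2 = t + 1 := Real.sq_sqrt (by linarith)
  have hsp : 0 < Real.sqrt (t+1) := Real.sqrt_pos.2 (by linarith)
  generalize Real.sqrt (t+1) = q at *
  rw [← hs]
  field_simp
  ring

lemma vv_t (lam k : ℝ) (sg : ℝ → ℝ) (x t sd : ℝ) (ht : 0 ≤ t) (hsd : HasDerivAt sg sd t) :
    HasDerivAt (fun τ => vv lam k sg x τ)
      (sd * (lam * Real.exp (-(sg t) ^ 2 / 4) + k * sg t) +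
       (lam * Real.exp (-(x / Real.sqrt (t + 1)) ^ 2 / 4) * (x / Real.sqrt (t + 1)) / 2
        + k * (x / Real.sqrt (t + 1)) ^ 2 / 2) / (t + 1)) t := by
  unfold vv
  have hs : Real.sqrt (t+1) ^ 2 = t + 1 := Real.sq_sqrt (by linarith)
  have hsp : 0 < Real.sqrt (t+1) := Real.sqrt_pos.2 (by linarith)
  have h0 : HasDerivAt (fun τ : ℝ => τ + 1) 1 t := (hasDerivAt_id t).add_const 1
  have h1 : HasDerivAt (fun τ : ℝ => x / Real.sqrt (τ+1)) _ t :=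
    (hasDerivAt_const t x).div (h0.sqrt (by linarith)) hsp.ne'
  have h2 := (EE_hasDerivAt (x / Real.sqrt (t+1))).comp t h1
  have h2' := (EE_hasDerivAt (sg t)).comp t hsd
  have h4 : HasDerivAt (fun τ : ℝ => x ^ 2 / (τ+1)) _ t :=
    (hasDerivAt_const t (x^2)).div h0 (by linarith)
  have h3 := ((h2'.sub h2).const_mul lam).add ((((hsd.pow 2).sub h4).const_mul k).div_const 2)
  refine h3.congr_deriv ?_
  generalize Real.sqrt (t+1) = q at *
  rw [← hs]
  field_simp
  push_cast
  ring

lemma first_touch {f : ℝ → ℝ} (hf : ContinuousOn f (Ici 0)) (h0 : f 0 < 0)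
    (hno : ∀ t0 > 0, (∀ t, 0 ≤ t → t < t0 → f t < 0) → f t0 = 0 → False) :
    ∀ t, 0 ≤ t → f t < 0 := by
  by_contra! hcon
  obtain ⟨t1, ht1, hft1⟩ := hcon
  set Z : Set ℝ := {t | t ∈ Icc 0 t1 ∧ f t = 0} with hZ
  have hf' : ContinuousOn f (Icc 0 t1) := hf.mono Icc_subset_Ici_self
  have hne : Z.Nonempty := by
    obtain ⟨z, hz, hz0⟩ := intermediate_value_Icc ht1 hf' ⟨h0.le, hft1⟩
    exact ⟨z, hz, hz0⟩
  have hcl : IsClosed Z := hf'.preimage_isClosed_of_isClosed isClosed_Icc (isClosed_singleton (x := (0:ℝ)))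
  have hbd : BddBelow Z := ⟨0, fun z hz => hz.1.1⟩
  have hmem := hcl.csInf_mem hne hbd
  set t0 := sInf Z
  have ht0 : 0 < t0 := by
    rcases hmem.1.1.eq_or_lt with h | h
    · have := hmem.2; rw [← h] at this; linarith
    · exact h
  refine hno t0 ht0 (fun t ht htt => ?_) hmem.2
  by_contra! hc
  obtain ⟨z, hz, hz0⟩ := intermediate_value_Icc ht (hf.mono Icc_subset_Ici_self) ⟨h0.le, hc⟩
  have : z ∈ Z := ⟨⟨hz.1, hz.2.trans (htt.le.trans hmem.1.2)⟩, hz0⟩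
  have := csInf_le hbd this
  linarith [hz.2]

lemma touch_deriv {f : ℝ → ℝ} {d t0 : ℝ} (ht0 : 0 < t0) (hd : HasDerivAt f d t0)
    (h1 : ∀ t, 0 ≤ t → t < t0 → f t < 0) (h2 : f t0 = 0) : 0 ≤ d :=
  left_deriv_nonneg ht0 hd.hasDerivWithinAt (fun y hy hy' => by linarith [h1 y hy.le hy'])

lemma vv_cont (lam k : ℝ) (sg : ℝ → ℝ) (hsg : ContinuousOn sg (Ici 0)) :
    ContinuousOn (fun p : ℝ × ℝ => vv lam k sg p.1 p.2) {p | 0 ≤ p.2} := by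
  unfold vv
  have h1 : ContinuousOn (fun p : ℝ × ℝ => sg p.2) {p | 0 ≤ p.2} :=
    hsg.comp continuousOn_snd (fun p hp => hp)
  have h2 : ContinuousOn (fun p : ℝ × ℝ => p.1 / Real.sqrt (p.2 + 1)) {p | 0 ≤ p.2} := by
    refine ContinuousOn.div (by fun_prop) (by fun_prop) (fun p hp => ?_)
    have : 0 ≤ p.2 := hp
    exact (Real.sqrt_pos.2 (by linarith)).ne'
  have h3 : ContinuousOn (fun p : ℝ × ℝ => p.1 ^ 2 / (p.2 + 1)) {p | 0 ≤ p.2} := by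
    refine ContinuousOn.div (by fun_prop) (by fun_prop) (fun p hp => ?_)
    have : 0 ≤ p.2 := hp
    linarith
  have h4 := EE_cont.comp_continuousOn h1
  have h5 := EE_cont.comp_continuousOn h2
  simp only [Function.comp_def] at h4 h5
  exact (continuousOn_const.mul (h4.sub h5)).add
    ((continuousOn_const.mul ((h1.pow 2).sub h3)).div_const 2)

section
variable {h b0 : ℝ} {u0 : ℝ → ℝ} {u : ℝ → ℝ → ℝ} {s : ℝ → ℝ}

lemma sol_s_cont (hsol : IsClassicalSolNSP h b0 u0 u s) : ContinuousOn s (Ici 0) :=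
  hsol.1.continuousOn

lemma sol_s_deriv (hsol : IsClassicalSolNSP h b0 u0 u s) {t : ℝ} (ht : 0 < t) :
    HasDerivAt s (-deriv (fun y => u y t) (s t)) t := by
  have h1 : DifferentiableAt ℝ s t :=
    (hsol.1.differentiableOn (by norm_num)).differentiableAt (Ici_mem_nhds ht)
  have := h1.hasDerivAt
  rwa [hsol.2.2.2.2.2.2.2.2.2.1 t ht] at this

lemma sol_init (hb0 : 0 < b0) (hlip : ∃ M : NNReal, LipschitzOnWith M u0 (Set.Ici 0))
    (hsol : IsClassicalSolNSP h b0 u0 u s) : ∀ x, 0 ≤ x → x ≤ b0 → u x 0 = u0 x := by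
  obtain ⟨M, hM⟩ := hlip
  have hc1 : ContinuousOn u0 (Icc 0 b0) := hM.continuousOn.mono Icc_subset_Ici_self
  have hc2 : ContinuousOn (fun x => u x 0) (Icc 0 b0) := by
    have := hsol.2.2.1
    exact this.comp (f := fun x : ℝ => (x, (0:ℝ))) (by fun_prop)
      (fun x hx => ⟨le_refl (0:ℝ), hx.1, by simp only [hsol.2.1]; exact hx.2⟩)
  have heq : EqOn (fun x => u x 0) u0 (Ioo 0 b0) := fun x hx =>
    hsol.2.2.2.2.2.2.2.2.2.2 x hx.1 hx.2
  have := heq.of_subset_closure hc2 hc1 Ioo_subset_Icc_self (by rw [closure_Ioo hb0.ne])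
  exact fun x h1 h2 => this ⟨h1, h2⟩

lemma sol_neu (hh : 0 < h) (hsol : IsClassicalSolNSP h b0 u0 u s) {t : ℝ} (ht : 0 < t) :
    HasDerivAt (fun y => u y t) (-(h / Real.sqrt (t + 1))) 0 := by
  have h1 := hsol.2.2.2.2.2.2.2.1 t ht
  have hp : 0 < h / Real.sqrt (t + 1) := div_pos hh (Real.sqrt_pos.2 (by linarith))
  have h2 : DifferentiableAt ℝ (fun y => u y t) 0 := by
    by_contra hc
    rw [deriv_zero_of_not_differentiableAt hc] at h1
    linarith
  have := h2.hasDerivAt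
  rwa [show deriv (fun y => u y t) 0 = -(h / Real.sqrt (t + 1)) by linarith] at this

lemma sol_int (hsol : IsClassicalSolNSP h b0 u0 u s) {t x : ℝ} (ht : 0 < t) (hx : 0 < x)
    (hxs : x < s t) : ∃ a, HasDerivAt (fun τ => u x τ) a t ∧
      (∀ᶠ y in 𝓝 x, HasDerivAt (fun y => u y t) (deriv (fun y => u y t) y) y) ∧
      HasDerivAt (deriv (fun y => u y t)) a x := by
  have H := hsol.2.2.2.2.2.2.1 t ht
  obtain ⟨h1, h2, h3, h4⟩ := H x hx hxs
  refine ⟨_, h1.hasDerivAt, ?_, ?_⟩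
  · filter_upwards [Ioo_mem_nhds hx hxs] with y hy
    exact (H y hy.1 hy.2).2.1.hasDerivAt
  · rw [h4]; exact h3.hasDerivAt

lemma sol_left (hsol : IsClassicalSolNSP h b0 u0 u s) {t : ℝ} (ht : 0 < t) (hs : 0 < s t) :
    HasDerivWithinAt (fun y => u y t) (deriv (fun y => u y t) (s t)) (Iic (s t)) (s t) := by
  have H := hsol.2.2.2.2.2.2.1 t ht
  have hIoo : Ioo 0 (s t) ∈ 𝓝[<] (s t) := Ioo_mem_nhdsLT hs
  refine hasDerivWithinAt_Iic_of_tendsto_deriv (s := Ioo 0 (s t))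
    (fun y hy => (H y hy.1 hy.2).2.1.differentiableWithinAt) ?_ hIoo ?_
  · have h1 := hsol.2.2.1 (s t, t) ⟨ht.le, hs.le, le_refl _⟩
    exact h1.comp (f := fun x : ℝ => (x, t)) (s := Ioo 0 (s t)) (x := s t)
      (by fun_prop) (fun x hx => ⟨ht.le, hx.1.le, hx.2.le⟩)
  · have h1 := hsol.2.2.2.1 (s t, t) ⟨ht, hs.le, le_refl _⟩
    have h2 := h1.comp (f := fun x : ℝ => (x, t)) (s := Ioo 0 (s t)) (x := s t)
      (by fun_prop) (fun x hx => ⟨ht, hx.1.le, hx.2.le⟩)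
    have h3 : Tendsto (deriv (fun y => u y t)) (𝓝[Ioo 0 (s t)] (s t)) (𝓝 (deriv (fun y => u y t) (s t))) := h2
    rwa [nhdsWithin_Ioo_eq_nhdsLT hs] at h3

lemma sol_nonneg (hh : 0 < h) (hsol : IsClassicalSolNSP h b0 u0 u s)
    (hinit : ∀ x, 0 ≤ x → x ≤ b0 → 0 ≤ u x 0)
    {T : ℝ} (hs : ∀ t ∈ Icc 0 T, 0 < s t) :
    ∀ t, 0 ≤ t → t ≤ T → ∀ x, 0 ≤ x → x ≤ s t → 0 ≤ u x t := by
  have key : ∀ ε > 0, ∀ t, 0 ≤ t → t ≤ T → ∀ x, 0 ≤ x → x ≤ s t → -u x t - ε * t ≤ 0 := by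
    intro ε hε
    refine max_principle s (fun x t => -u x t - ε * t) ((sol_s_cont hsol).mono Icc_subset_Ici_self) hs
      ?_ ?_ ?_ ?_ ?_
    · refine ContinuousOn.sub (ContinuousOn.neg ?_) (by fun_prop)
      exact hsol.2.2.1.mono (fun p hp => ⟨hp.1.1, hp.2⟩)
    · intro x hx hx'
      rw [hsol.2.1] at hx'
      simpa using hinit x hx hx'
    · intro t ht _
      rw [hsol.2.2.2.2.2.2.2.2.1 t ht]
      have := mul_pos hε ht
      linarith
    · intro t ht _
      have := (sol_neu hh hsol ht).neg.sub_const (ε * t)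
      refine ⟨_, ?_, this⟩
      have : 0 < h / Real.sqrt (t + 1) := div_pos hh (Real.sqrt_pos.2 (by linarith))
      linarith
    · intro t ht _ x hx hxs
      obtain ⟨a, h1, h2, h3⟩ := sol_int hsol ht hx hxs
      refine ⟨-a - ε * 1, -a, fun y => - deriv (fun y => u y t) y,
        h1.neg.sub ((hasDerivAt_id t).const_mul ε), ?_, h3.neg, by linarith⟩
      filter_upwards [h2] with y hy using hy.neg.sub_const (ε * t)
  intro t ht htT x hx hxs
  by_contra! hc
  have := key (-u x t / (2 * (t + 1))) (by apply div_pos <;> linarith) t ht htT x hx hxs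
  have h2 : -u x t / (2 * (t + 1)) * t ≤ -u x t / 2 := by
    rw [div_mul_eq_mul_div, div_le_div_iff₀ (by linarith) (by norm_num)]
    nlinarith
  linarith

lemma S_deriv {sg : ℝ → ℝ} {sd t : ℝ} (ht : 0 ≤ t) (hsd : HasDerivAt sg sd t) :
    HasDerivAt (fun τ => sg τ * Real.sqrt (τ + 1)) ((sd * (t + 1) + sg t / 2) / Real.sqrt (t + 1)) t := by
  have h0 : HasDerivAt (fun τ : ℝ => τ + 1) 1 t := (hasDerivAt_id t).add_const 1
  have hs : Real.sqrt (t+1) ^ 2 = t + 1 := Real.sq_sqrt (by linarith)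
  have hsp : 0 < Real.sqrt (t+1) := Real.sqrt_pos.2 (by linarith)
  refine (hsd.mul (h0.sqrt (by linarith))).congr_deriv ?_
  generalize Real.sqrt (t+1) = q at *
  rw [← hs]
  field_simp

lemma vx_S {lam k g t : ℝ} (ht : 0 ≤ t) :
    vx lam k (g * Real.sqrt (t + 1)) t = -(lam * Real.exp (-g ^ 2 / 4) + k * g) / Real.sqrt (t + 1) := by
  have hs : Real.sqrt (t+1) ^ 2 = t + 1 := Real.sq_sqrt (by linarith)
  have hsp : 0 < Real.sqrt (t+1) := Real.sqrt_pos.2 (by linarith)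
  unfold vx
  rw [mul_div_cancel_right₀ _ hsp.ne']
  generalize Real.sqrt (t+1) = q at *
  rw [← hs]
  field_simp
  ring

lemma vv_S {lam k t : ℝ} {sg : ℝ → ℝ} (ht : 0 ≤ t) :
    vv lam k sg (sg t * Real.sqrt (t + 1)) t = 0 := by
  have hs : Real.sqrt (t+1) ^ 2 = t + 1 := Real.sq_sqrt (by linarith)
  have hsp : 0 < Real.sqrt (t+1) := Real.sqrt_pos.2 (by linarith)
  unfold vv
  rw [mul_div_cancel_right₀ _ hsp.ne', mul_pow, hs, mul_div_cancel_right₀ _ (by linarith)]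
  ring

lemma vx_zero {lam k t : ℝ} : vx lam k 0 t = - (lam / Real.sqrt (t + 1)) := by
  unfold vx
  simp
  ring

lemma vv_eta {lam k t x : ℝ} {sg : ℝ → ℝ} (ht : 0 ≤ t) :
    vv lam k sg x t = lam * (EE (sg t) - EE (x / Real.sqrt (t + 1))) +
      k * ((sg t) ^ 2 - (x / Real.sqrt (t + 1)) ^ 2) / 2 := by
  unfold vv
  rw [div_pow, Real.sq_sqrt (by linarith)]

lemma super_comp (hh : 0 < h) (hsol : IsClassicalSolNSP h b0 u0 u s)
    (hspos : ∀ t, 0 ≤ t → 0 < s t) {lam k : ℝ} (hlam : h < lam) (hk : 0 < k) (sg sd : ℝ → ℝ)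
    (hsg : ∀ t, 0 ≤ t → HasDerivAt sg (sd t) t)
    (hpde : ∀ t, 0 < t → 0 < sd t * (t + 1) * (lam * Real.exp (-(sg t) ^ 2 / 4) + k * sg t) + k)
    (hstef : ∀ t, 0 < t → lam * Real.exp (-(sg t) ^ 2 / 4) + k * sg t < sd t * (t + 1) + sg t / 2)
    (hs0 : b0 < sg 0) (hinit : ∀ x, 0 ≤ x → x ≤ b0 → u x 0 ≤ vv lam k sg x 0) :
    (∀ t, 0 ≤ t → s t < sg t * Real.sqrt (t + 1)) ∧
    ∀ t, 0 ≤ t → ∀ x, 0 ≤ x → x ≤ s t → u x t ≤ vv lam k sg x t := by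
  have hsgc : ContinuousOn sg (Ici 0) := fun t ht => (hsg t ht).continuousAt.continuousWithinAt
  have MP : ∀ T, (∀ t, 0 ≤ t → t ≤ T → s t ≤ sg t * Real.sqrt (t + 1)) →
      ∀ t, 0 ≤ t → t ≤ T → ∀ x, 0 ≤ x → x ≤ s t → u x t - vv lam k sg x t ≤ 0 := by
    intro T hle
    refine max_principle s (fun x t => u x t - vv lam k sg x t)
      ((sol_s_cont hsol).mono Icc_subset_Ici_self) (fun t ht => hspos t ht.1) ?_ ?_ ?_ ?_ ?_
    · exact (hsol.2.2.1.mono (fun p hp => ⟨hp.1.1, hp.2⟩)).sub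
        ((vv_cont lam k sg hsgc).mono (fun p hp => hp.1.1))
    · intro x hx hx'
      rw [hsol.2.1] at hx'
      linarith [hinit x hx hx']
    · intro t ht htT
      rw [hsol.2.2.2.2.2.2.2.2.1 t ht, vv_eta ht.le]
      have hsp : 0 < Real.sqrt (t+1) := Real.sqrt_pos.2 (by linarith)
      have h1 : s t / Real.sqrt (t+1) ≤ sg t := (div_le_iff₀ hsp).2 (hle t ht.le htT)
      have h2 : 0 ≤ s t / Real.sqrt (t+1) := div_nonneg (hspos t ht.le).le hsp.le
      have h3 := EE_mono h1
      have h4 : 0 ≤ lam * (EE (sg t) - EE (s t / Real.sqrt (t + 1))) :=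
        mul_nonneg (by linarith) (by linarith)
      have h5 : 0 ≤ k * ((sg t) ^ 2 - (s t / Real.sqrt (t + 1)) ^ 2) :=
        mul_nonneg hk.le (by nlinarith)
      linarith
    · intro t ht _
      refine ⟨_, ?_, (sol_neu hh hsol ht).sub (vv_x lam k sg 0 t)⟩
      rw [vx_zero]
      have hsp : 0 < Real.sqrt (t+1) := Real.sqrt_pos.2 (by linarith)
      have : h / Real.sqrt (t+1) < lam / Real.sqrt (t+1) := div_lt_div_of_pos_right hlam hsp
      linarith
    · intro t ht _ x hx hxs
      obtain ⟨a, h1, h2, h3⟩ := sol_int hsol ht hx hxs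
      refine ⟨_, _, fun y => deriv (fun y => u y t) y - vx lam k y t,
        h1.sub (vv_t lam k sg x t (sd t) ht.le (hsg t ht.le)), ?_, h3.sub (vv_xx lam k x t ht.le), ?_⟩
      · filter_upwards [h2] with y hy using hy.sub (vv_x lam k sg y t)
      · have hp := hpde t ht
        have ht1 : 0 < t + 1 := by linarith
        have h5 : 0 ≤ k * (x / Real.sqrt (t + 1)) ^ 2 / 2 := by positivity
        generalize lam * Real.exp (-(sg t) ^ 2 / 4) + k * sg t = Q at *
        generalize lam * Real.exp (-(x / Real.sqrt (t + 1)) ^ 2 / 4) * (x / Real.sqrt (t + 1)) / 2 = R at *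
        generalize k * (x / Real.sqrt (t + 1)) ^ 2 / 2 = W at *
        have : (R - k) / (t+1) < sd t * Q + (R + W) / (t+1) := by
          rw [div_lt_iff₀ ht1, add_mul, div_mul_cancel₀ _ ht1.ne']
          nlinarith
        linarith
  have hlt : ∀ t, 0 ≤ t → s t - sg t * Real.sqrt (t + 1) < 0 := by
    refine first_touch ((sol_s_cont hsol).sub (hsgc.mul (by fun_prop))) ?_ ?_
    · rw [hsol.2.1]; simp; exact hs0
    · intro t0 ht0 hb heq
      have hd := touch_deriv ht0 ((sol_s_deriv hsol ht0).sub (S_deriv ht0.le (hsg t0 ht0.le))) hb heq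
      have hM := MP t0 (fun t ht htt => by
        rcases htt.eq_or_lt with h1 | h1
        · rw [h1]; linarith
        · linarith [hb t ht h1]) t0 ht0.le le_rfl
      have hst : s t0 = sg t0 * Real.sqrt (t0 + 1) := by linarith
      have hL := left_deriv_nonneg (hspos t0 ht0.le)
        ((sol_left hsol ht0 (hspos t0 ht0.le)).sub (vv_x lam k sg (s t0) t0).hasDerivWithinAt)
        (fun y hy hy' => by
          have h1 := hM y hy.le hy'.le
          have h2 : u (s t0) t0 - vv lam k sg (s t0) t0 = 0 := by
            rw [hsol.2.2.2.2.2.2.2.2.1 t0 ht0, hst, vv_S ht0.le]; ring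
          simp only [Pi.sub_apply]
          linarith)
      rw [hst, vx_S ht0.le, ← hst] at hL
      have hsp : 0 < Real.sqrt (t0+1) := Real.sqrt_pos.2 (by linarith)
      have := div_lt_div_of_pos_right (hstef t0 ht0) hsp
      rw [neg_div] at hL
      linarith
  refine ⟨fun t ht => by linarith [hlt t ht], fun t ht x hx hxs => ?_⟩
  have := MP t (fun τ hτ _ => by linarith [hlt τ hτ]) t ht le_rfl x hx hxs
  linarith

lemma sub_comp (hh : 0 < h) (hsol : IsClassicalSolNSP h b0 u0 u s)
    (hi0 : ∀ x, 0 ≤ x → x ≤ b0 → 0 ≤ u x 0)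
    {lam k : ℝ} (hlam : lam < h) (hk : 0 < k) (sg sd : ℝ → ℝ)
    (hsg : ∀ t, 0 ≤ t → HasDerivAt sg (sd t) t) (hsgpos : ∀ t, 0 ≤ t → 0 < sg t)
    (hpde : ∀ t, 0 < t → sd t * (t + 1) * (lam * Real.exp (-(sg t) ^ 2 / 4) + (-k) * sg t) - k < 0)
    (hstef : ∀ t, 0 < t → sd t * (t + 1) + sg t / 2 < lam * Real.exp (-(sg t) ^ 2 / 4) + (-k) * sg t)
    (hs0 : sg 0 < b0) (hinit : ∀ x, 0 ≤ x → x ≤ sg 0 → vv lam (-k) sg x 0 ≤ u x 0) :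
    (∀ t, 0 ≤ t → sg t * Real.sqrt (t + 1) < s t) ∧
    (∀ t, 0 ≤ t → ∀ x, 0 ≤ x → x ≤ s t → 0 ≤ u x t) ∧
    ∀ t, 0 ≤ t → ∀ x, 0 ≤ x → x ≤ sg t * Real.sqrt (t + 1) → vv lam (-k) sg x t ≤ u x t := by
  have hsgc : ContinuousOn sg (Ici 0) := fun t ht => (hsg t ht).continuousAt.continuousWithinAt
  have hSpos : ∀ t, 0 ≤ t → 0 < sg t * Real.sqrt (t + 1) := fun t ht =>
    mul_pos (hsgpos t ht) (Real.sqrt_pos.2 (by linarith))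
  have NN : ∀ T, (∀ t, 0 ≤ t → t ≤ T → sg t * Real.sqrt (t + 1) ≤ s t) →
      ∀ t, 0 ≤ t → t ≤ T → ∀ x, 0 ≤ x → x ≤ s t → 0 ≤ u x t := fun T hle =>
    sol_nonneg hh hsol hi0 (fun t ht => (hSpos t ht.1).trans_le (hle t ht.1 ht.2))
  have MP : ∀ T, (∀ t, 0 ≤ t → t ≤ T → sg t * Real.sqrt (t + 1) ≤ s t) →
      ∀ t, 0 ≤ t → t ≤ T → ∀ x, 0 ≤ x → x ≤ sg t * Real.sqrt (t + 1) →
        vv lam (-k) sg x t - u x t ≤ 0 := by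
    intro T hle
    refine max_principle (fun t => sg t * Real.sqrt (t + 1)) (fun x t => vv lam (-k) sg x t - u x t)
      ((hsgc.mul (by fun_prop)).mono Icc_subset_Ici_self) (fun t ht => hSpos t ht.1) ?_ ?_ ?_ ?_ ?_
    · exact ((vv_cont lam (-k) sg hsgc).mono (fun p hp => hp.1.1)).sub
        (hsol.2.2.1.mono (fun p hp => ⟨hp.1.1, hp.2.1, hp.2.2.trans (hle _ hp.1.1 hp.1.2)⟩))
    · intro x hx hx'
      simp at hx'
      linarith [hinit x hx hx']
    · intro t ht htT
      rw [vv_S ht.le]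
      linarith [NN T hle t ht.le htT _ (hSpos t ht.le).le (hle t ht.le htT)]
    · intro t ht _
      refine ⟨_, ?_, (vv_x lam (-k) sg 0 t).sub (sol_neu hh hsol ht)⟩
      rw [vx_zero]
      have hsp : 0 < Real.sqrt (t+1) := Real.sqrt_pos.2 (by linarith)
      have : lam / Real.sqrt (t+1) < h / Real.sqrt (t+1) := div_lt_div_of_pos_right hlam hsp
      linarith
    · intro t ht htT x hx hxs
      obtain ⟨a, h1, h2, h3⟩ := sol_int hsol ht hx (hxs.trans_le (hle t ht.le htT))
      refine ⟨_, _, fun y => vx lam (-k) y t - deriv (fun y => u y t) y,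
        (vv_t lam (-k) sg x t (sd t) ht.le (hsg t ht.le)).sub h1, ?_, (vv_xx lam (-k) x t ht.le).sub h3, ?_⟩
      · filter_upwards [h2] with y hy using (vv_x lam (-k) sg y t).sub hy
      · have hp := hpde t ht
        have ht1 : 0 < t + 1 := by linarith
        have h5 : -k * (x / Real.sqrt (t + 1)) ^ 2 / 2 ≤ 0 := by
          have : 0 ≤ k * (x / Real.sqrt (t + 1)) ^ 2 := by positivity
          linarith
        generalize lam * Real.exp (-(sg t) ^ 2 / 4) + -k * sg t = Q at *
        generalize lam * Real.exp (-(x / Real.sqrt (t + 1)) ^ 2 / 4) * (x / Real.sqrt (t + 1)) / 2 = R at *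
        generalize -k * (x / Real.sqrt (t + 1)) ^ 2 / 2 = W at *
        have : sd t * Q + (R + W) / (t+1) < (R - -k) / (t+1) := by
          rw [lt_div_iff₀ ht1, add_mul, div_mul_cancel₀ _ ht1.ne']
          nlinarith
        linarith
  have hlt : ∀ t, 0 ≤ t → sg t * Real.sqrt (t + 1) - s t < 0 := by
    refine first_touch ((hsgc.mul (by fun_prop)).sub (sol_s_cont hsol)) ?_ ?_
    · rw [hsol.2.1]; simp; exact hs0
    · intro t0 ht0 hb heq
      have hd := touch_deriv ht0 ((S_deriv ht0.le (hsg t0 ht0.le)).sub (sol_s_deriv hsol ht0)) hb heq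
      have hM := MP t0 (fun t ht htt => by
        rcases htt.eq_or_lt with h1 | h1
        · rw [h1]; linarith
        · linarith [hb t ht h1]) t0 ht0.le le_rfl
      have hst : s t0 = sg t0 * Real.sqrt (t0 + 1) := by linarith
      have hspos : 0 < s t0 := by rw [hst]; exact hSpos t0 ht0.le
      have hL := left_deriv_nonneg hspos
        ((vv_x lam (-k) sg (s t0) t0).hasDerivWithinAt.sub (sol_left hsol ht0 hspos))
        (fun y hy hy' => by
          have h1 := hM y hy.le (by linarith)
          have h2 : vv lam (-k) sg (s t0) t0 - u (s t0) t0 = 0 := by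
            rw [hsol.2.2.2.2.2.2.2.2.1 t0 ht0, hst, vv_S ht0.le]; ring
          simp only [Pi.sub_apply]
          linarith)
      rw [hst, vx_S ht0.le, ← hst] at hL
      have hsp : 0 < Real.sqrt (t0+1) := Real.sqrt_pos.2 (by linarith)
      have := div_lt_div_of_pos_right (hstef t0 ht0) hsp
      rw [neg_div] at hL
      linarith
  have hle : ∀ t, ∀ τ, 0 ≤ τ → τ ≤ t → sg τ * Real.sqrt (τ + 1) ≤ s τ := fun t τ hτ _ => by
    linarith [hlt τ hτ]
  refine ⟨fun t ht => by linarith [hlt t ht], fun t ht => NN t (hle t) t ht le_rfl,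
    fun t ht x hx hxs => ?_⟩
  linarith [MP t (hle t) t ht le_rfl x hx hxs]

end

/-- scaled free boundary of the barrier -/
noncomputable def sgm (A B γ t : ℝ) : ℝ := A + B * (t + 1) ^ (-γ)

lemma sgm_deriv (A B γ t : ℝ) (ht : 0 ≤ t) :
    HasDerivAt (sgm A B γ) (-γ * (sgm A B γ t - A) / (t + 1)) t := by
  have h0 : HasDerivAt (fun τ : ℝ => τ + 1) 1 t := (hasDerivAt_id t).add_const 1
  have ht1 : 0 < t + 1 := by linarith
  have h1 := ((h0.rpow_const (p := -γ) (Or.inl ht1.ne')).const_mul B).const_add A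
  refine h1.congr_deriv ?_
  unfold sgm
  rw [Real.rpow_sub_one ht1.ne']
  ring

lemma sgm_pow {γ t : ℝ} (hγ : 0 < γ) (ht : 0 ≤ t) :
    0 < (t + 1) ^ (-γ) ∧ (t + 1) ^ (-γ) ≤ 1 :=
  ⟨Real.rpow_pos_of_pos (by linarith) _,
    Real.rpow_le_one_of_one_le_of_nonpos (by linarith) (by linarith)⟩

lemma sgm_zero (A B γ : ℝ) : sgm A B γ 0 = A + B := by simp [sgm]

lemma sgm_tendsto (A B : ℝ) {γ : ℝ} (hγ : 0 < γ) : Tendsto (sgm A B γ) atTop (𝓝 A) := by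
  have h1 : Tendsto (fun t : ℝ => (t + 1) ^ (-γ)) atTop (𝓝 0) :=
    (tendsto_rpow_neg_atTop hγ).comp (tendsto_atTop_add_const_right _ 1 tendsto_id)
  have := (h1.const_mul B).const_add A
  simp only [mul_zero, add_zero] at this
  exact this

section
variable {h b0 ω : ℝ} {u0 : ℝ → ℝ} {u : ℝ → ℝ → ℝ} {s : ℝ → ℝ}

set_option maxHeartbeats 4000000 in
lemma super_final (hh : 0 < h) (hb0 : 0 < b0) (hω : 0 < ω)
    (hroot : h = ω / 2 * Real.exp (ω ^ 2 / 4)) (hsol : IsClassicalSolNSP h b0 u0 u s)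
    (hspos : ∀ t, 0 ≤ t → 0 < s t)
    {C : ℝ} (hC : ∀ x, 0 ≤ x → x ≤ b0 → u x 0 ≤ C) (hC0 : 0 ≤ C) :
    ∀ ε > 0, ∃ T, 0 ≤ T ∧ ∀ t ≥ T, s t / Real.sqrt (t + 1) ≤ ω + ε ∧ ∀ x, 0 ≤ x → x ≤ s t →
      u x t ≤ h * (EE ω - EE (x / Real.sqrt (t + 1))) + ε := by
  intro ε hε
  obtain ⟨δ, hδ, hδε⟩ : ∃ δ > 0, 2 * δ ≤ ε ∧ h * (2 * δ) ≤ ε / 2 := by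
    refine ⟨min (ε / 2) (ε / (4 * h)), by positivity, ?_, ?_⟩
    · linarith [min_le_left (ε / 2) (ε / (4 * h))]
    · have := mul_le_mul_of_nonneg_left (min_le_right (ε / 2) (ε / (4 * h))) hh.le
      have h2 : h * (ε / (4 * h)) = ε / 4 := by field_simp
      linarith
  set A := ω + δ with hA
  have hA0 : 0 < A := by positivity
  have hAroot : h * Real.exp (-A ^ 2 / 4) < A / 2 := by
    have h1 : Real.exp (-A ^ 2 / 4) ≤ Real.exp (-ω ^ 2 / 4) := Real.exp_le_exp.2 (by nlinarith)
    have h2 : h * Real.exp (-ω ^ 2 / 4) = ω / 2 := by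
      rw [hroot, mul_assoc, ← Real.exp_add]; ring_nf; simp
    nlinarith [mul_le_mul_of_nonneg_left h1 hh.le]
  obtain ⟨k, hk, hkhalf, hkA, hkε⟩ : ∃ k > 0, k < 1 / 2 ∧
      (h + k) * Real.exp (-A ^ 2 / 4) < (1 / 2 - k) * A ∧
      k * (A + δ) + k * (A + δ) ^ 2 / 2 < ε / 2 := by
    have e1 : ∀ᶠ k in 𝓝 (0:ℝ), k < 1 / 2 := gt_mem_nhds (by norm_num)
    have e2 : ∀ᶠ k in 𝓝 (0:ℝ), (h + k) * Real.exp (-A ^ 2 / 4) < (1 / 2 - k) * A :=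
      ContinuousAt.eventually_lt (f := fun k : ℝ => (h + k) * Real.exp (-A ^ 2 / 4))
        (g := fun k : ℝ => (1 / 2 - k) * A) (by fun_prop) (by fun_prop) (by simp; linarith)
    have e3 : ∀ᶠ k in 𝓝 (0:ℝ), k * (A + δ) + k * (A + δ) ^ 2 / 2 < ε / 2 :=
      ContinuousAt.eventually_lt (f := fun k : ℝ => k * (A + δ) + k * (A + δ) ^ 2 / 2)
        (g := fun _ : ℝ => ε / 2) (by fun_prop) (by fun_prop) (by simp; linarith)
    have e4 : ∀ᶠ k in 𝓝[>] (0:ℝ), (k < 1 / 2 ∧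
      (h + k) * Real.exp (-A ^ 2 / 4) < (1 / 2 - k) * A ∧
      k * (A + δ) + k * (A + δ) ^ 2 / 2 < ε / 2) := nhdsWithin_le_nhds (e1.and (e2.and e3))
    obtain ⟨k, hk1, hk2⟩ := (e4.and self_mem_nhdsWithin).exists
    exact ⟨k, hk2, hk1⟩
  set B := b0 + 2 * C / k + 1 with hB
  have hCk : 0 ≤ 2 * C / k := by positivity
  have hB0 : 0 < B := by positivity
  obtain ⟨γ, hγ, hγ1, hγ2⟩ : ∃ γ > 0, γ ≤ 1 / 2 - k ∧ γ * (B * ((h + k) + k * (A + B))) < k := by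
    set Q := B * ((h + k) + k * (A + B)) with hQ
    have hQ0 : 0 < Q := by positivity
    refine ⟨min (1 / 2 - k) (k / (2 * Q)), lt_min (by linarith) (by positivity), min_le_left _ _, ?_⟩
    have := mul_le_mul_of_nonneg_right (min_le_right (1 / 2 - k) (k / (2 * Q))) hQ0.le
    have h2 : k / (2 * Q) * Q = k / 2 := by field_simp
    linarith
  have hrange : ∀ t, 0 ≤ t → A < sgm A B γ t ∧ sgm A B γ t ≤ A + B := fun t ht => by
    obtain ⟨h1, h2⟩ := sgm_pow hγ ht
    unfold sgm
    constructor <;> nlinarith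
  have key := super_comp hh hsol hspos (lam := h + k) (k := k) (by linarith) hk (sgm A B γ)
    (fun t => -γ * (sgm A B γ t - A) / (t + 1)) (fun t ht => sgm_deriv A B γ t ht) ?_ ?_ ?_ ?_
  · obtain ⟨hS, hu⟩ := key
    have hev := (sgm_tendsto A B hγ).eventually (gt_mem_nhds (show A < A + δ by linarith))
    obtain ⟨T, hT⟩ := eventually_atTop.1 hev
    refine ⟨max T 0, le_max_right _ _, fun t ht => ?_⟩
    have ht0 : 0 ≤ t := (le_max_right _ _).trans ht
    have hσ := hT t ((le_max_left _ _).trans ht)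
    have hsp : 0 < Real.sqrt (t+1) := Real.sqrt_pos.2 (by linarith)
    have hsσ : s t / Real.sqrt (t+1) < sgm A B γ t := (div_lt_iff₀ hsp).2 (hS t ht0)
    refine ⟨by linarith [hδε.1], fun x hx hxs => ?_⟩
    have h1 := hu t ht0 x hx hxs
    rw [vv_eta ht0] at h1
    have hησ : x / Real.sqrt (t+1) ≤ sgm A B γ t :=
      (div_le_div_of_nonneg_right hxs hsp.le).trans hsσ.le
    have hη0 : 0 ≤ x / Real.sqrt (t+1) := div_nonneg hx hsp.le
    generalize x / Real.sqrt (t+1) = η at *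
    have hr := hrange t ht0
    generalize sgm A B γ t = σ at *
    have l1 := EE_lip hησ
    have l2 : EE σ - EE ω ≤ σ - ω := EE_lip (by linarith)
    have m1 : k * (EE σ - EE η) ≤ k * (A + δ) := mul_le_mul_of_nonneg_left (by linarith) hk.le
    have m2 : h * (EE σ - EE ω) ≤ h * (2 * δ) := mul_le_mul_of_nonneg_left (by linarith) hh.le
    have m3 : k * (σ ^ 2 - η ^ 2) ≤ k * (A + δ) ^ 2 := mul_le_mul_of_nonneg_left (by nlinarith) hk.le
    linarith [hδε.2]
  · intro t ht
    obtain ⟨r1, r2⟩ := hrange t ht.le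
    have ht1 : t + 1 ≠ 0 := by linarith
    simp only [div_mul_cancel₀ _ ht1]
    generalize sgm A B γ t = σ at *
    have he : Real.exp (-σ ^ 2 / 4) ≤ 1 := Real.exp_le_one_iff.2 (by nlinarith [sq_nonneg σ])
    have he0 : 0 < Real.exp (-σ ^ 2 / 4) := Real.exp_pos _
    have hQ : (h + k) * Real.exp (-σ ^ 2 / 4) + k * σ ≤ (h + k) + k * (A + B) := by
      nlinarith
    have hQ0 : 0 ≤ (h + k) * Real.exp (-σ ^ 2 / 4) + k * σ := by
      have : 0 < σ := by linarith
      positivity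
    have hm := mul_le_mul (show σ - A ≤ B by linarith) hQ hQ0 hB0.le
    have := mul_le_mul_of_nonneg_left hm hγ.le
    linarith
  · intro t ht
    obtain ⟨r1, r2⟩ := hrange t ht.le
    have ht1 : t + 1 ≠ 0 := by linarith
    simp only [div_mul_cancel₀ _ ht1]
    generalize sgm A B γ t = σ at *
    have he : Real.exp (-σ ^ 2 / 4) ≤ Real.exp (-A ^ 2 / 4) := Real.exp_le_exp.2 (by nlinarith)
    have := mul_le_mul_of_nonneg_left he (show 0 ≤ h + k by linarith)
    have h2 := mul_le_mul_of_nonneg_right hγ1 (show 0 ≤ σ - A by linarith)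
    linarith
  · rw [sgm_zero]; linarith
  · intro x hx hxb
    refine (hC x hx hxb).trans ?_
    rw [vv_eta le_rfl, sgm_zero]
    simp only [zero_add, Real.sqrt_one, div_one]
    have h1 : EE x ≤ EE (A + B) := EE_mono (by linarith)
    have h2 : 0 ≤ (h + k) * (EE (A + B) - EE x) := mul_nonneg (by linarith) (by linarith)
    have h3 : 2 * C / k ≤ (A + B) ^ 2 - x ^ 2 := by nlinarith
    have h4 := mul_le_mul_of_nonneg_left h3 hk.le
    have h5 : k * (2 * C / k) = 2 * C := by field_simp
    linarith

set_option maxHeartbeats 4000000 in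
lemma sub_final (hh : 0 < h) (hb0 : 0 < b0) (hω : 0 < ω)
    (hroot : h = ω / 2 * Real.exp (ω ^ 2 / 4)) (hsol : IsClassicalSolNSP h b0 u0 u s)
    (hi0 : ∀ x, 0 ≤ x → x ≤ b0 → 0 ≤ u x 0)
    {c r : ℝ} (hc : 0 < c) (hr : 0 < r) (hcr : ∀ x, 0 ≤ x → x ≤ b0 → x ≤ r → c ≤ u x 0) :
    (∀ t, 0 ≤ t → 0 < s t) ∧ (∀ t, 0 ≤ t → ∀ x, 0 ≤ x → x ≤ s t → 0 ≤ u x t) ∧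
    ∀ ε > 0, ∃ T, 0 ≤ T ∧ ∀ t ≥ T, ω - ε ≤ s t / Real.sqrt (t + 1) ∧ ∀ x, 0 ≤ x → x ≤ s t →
      h * (EE ω - EE (x / Real.sqrt (t + 1))) - ε ≤ u x t := by
  have main : ∀ ε > 0, ((∀ t, 0 ≤ t → 0 < s t) ∧ (∀ t, 0 ≤ t → ∀ x, 0 ≤ x → x ≤ s t → 0 ≤ u x t)) ∧
    ∃ T, 0 ≤ T ∧ ∀ t ≥ T, ω - ε ≤ s t / Real.sqrt (t + 1) ∧ ∀ x, 0 ≤ x → x ≤ s t →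
      h * (EE ω - EE (x / Real.sqrt (t + 1))) - ε ≤ u x t := by
    intro ε hε
    obtain ⟨δ, hδ, hδω, hδε⟩ : ∃ δ > 0, 2 * δ ≤ ω ∧ 2 * δ ≤ ε ∧ h * (2 * δ) ≤ ε / 2 := by
      refine ⟨min (ω / 2) (min (ε / 2) (ε / (4 * h))), by positivity, ?_, ?_, ?_⟩
      · linarith [min_le_left (ω / 2) (min (ε / 2) (ε / (4 * h)))]
      · linarith [min_le_right (ω / 2) (min (ε / 2) (ε / (4 * h))), min_le_left (ε / 2) (ε / (4 * h))]
      · have := mul_le_mul_of_nonneg_left ((min_le_right (ω / 2) _).trans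
          (min_le_right (ε / 2) (ε / (4 * h)))) hh.le
        have h2 : h * (ε / (4 * h)) = ε / 4 := by field_simp
        linarith
    set A := ω - δ with hA
    have hA0 : 0 < A := by linarith
    have hAroot : A / 2 < h * Real.exp (-A ^ 2 / 4) := by
      have h1 : Real.exp (-ω ^ 2 / 4) ≤ Real.exp (-A ^ 2 / 4) := Real.exp_le_exp.2 (by nlinarith)
      have h2 : h * Real.exp (-ω ^ 2 / 4) = ω / 2 := by
        rw [hroot, mul_assoc, ← Real.exp_add]; ring_nf; simp
      nlinarith [mul_le_mul_of_nonneg_left h1 hh.le]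
    obtain ⟨k, hk, hkh, hkA, hkε⟩ : ∃ k > 0, k < h ∧
        (1 / 2 + k) * A < (h - k) * Real.exp (-A ^ 2 / 4) ∧
        k * ω + k * ω ^ 2 / 2 < ε / 2 := by
      have e1 : ∀ᶠ k in 𝓝 (0:ℝ), k < h := gt_mem_nhds hh
      have e2 : ∀ᶠ k in 𝓝 (0:ℝ), (1 / 2 + k) * A < (h - k) * Real.exp (-A ^ 2 / 4) :=
        ContinuousAt.eventually_lt (g := fun k : ℝ => (h - k) * Real.exp (-A ^ 2 / 4))
          (f := fun k : ℝ => (1 / 2 + k) * A) (by fun_prop) (by fun_prop) (by simp; linarith)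
      have e3 : ∀ᶠ k in 𝓝 (0:ℝ), k * ω + k * ω ^ 2 / 2 < ε / 2 :=
        ContinuousAt.eventually_lt (f := fun k : ℝ => k * ω + k * ω ^ 2 / 2)
          (g := fun _ : ℝ => ε / 2) (by fun_prop) (by fun_prop) (by simp; linarith)
      have e4 : ∀ᶠ k in 𝓝[>] (0:ℝ), (k < h ∧
        (1 / 2 + k) * A < (h - k) * Real.exp (-A ^ 2 / 4) ∧
        k * ω + k * ω ^ 2 / 2 < ε / 2) := nhdsWithin_le_nhds (e1.and (e2.and e3))
      obtain ⟨k, hk1, hk2⟩ := (e4.and self_mem_nhdsWithin).exists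
      exact ⟨k, hk2, hk1⟩
    obtain ⟨σ0, hσ0, hσA, hσb, hσr, hσc⟩ : ∃ σ0 > 0, σ0 < A ∧ σ0 < b0 ∧ σ0 ≤ r ∧ h * σ0 ≤ c := by
      refine ⟨min (min (A / 2) (b0 / 2)) (min r (c / h)), by positivity, ?_, ?_, ?_, ?_⟩
      · linarith [min_le_left (min (A / 2) (b0 / 2)) (min r (c / h)), min_le_left (A / 2) (b0 / 2)]
      · linarith [min_le_left (min (A / 2) (b0 / 2)) (min r (c / h)), min_le_right (A / 2) (b0 / 2)]
      · exact (min_le_right _ _).trans (min_le_left _ _)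
      · have := mul_le_mul_of_nonneg_left ((min_le_right (min (A / 2) (b0 / 2)) _).trans
          (min_le_right r (c / h))) hh.le
        have h2 : h * (c / h) = c := by field_simp
        linarith
    set B := σ0 - A with hB
    obtain ⟨γ, hγ, hγ1, hγ2⟩ : ∃ γ > 0, γ ≤ 1 / 2 ∧ γ * (A * h) < k := by
      have hQ0 : 0 < A * h := by positivity
      refine ⟨min (1 / 2) (k / (2 * (A * h))), by positivity, min_le_left _ _, ?_⟩
      have := mul_le_mul_of_nonneg_right (min_le_right (1 / 2) (k / (2 * (A * h)))) hQ0.le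
      have h2 : k / (2 * (A * h)) * (A * h) = k / 2 := by field_simp
      linarith
    have hrange : ∀ t, 0 ≤ t → σ0 ≤ sgm A B γ t ∧ sgm A B γ t < A := fun t ht => by
      obtain ⟨h1, h2⟩ := sgm_pow hγ ht
      unfold sgm
      constructor <;> nlinarith
    have key := sub_comp hh hsol hi0 (lam := h - k) (k := k) (by linarith) hk (sgm A B γ)
      (fun t => -γ * (sgm A B γ t - A) / (t + 1)) (fun t ht => sgm_deriv A B γ t ht)
      (fun t ht => hσ0.trans_le (hrange t ht).1) ?_ ?_ ?_ ?_
    · obtain ⟨hS, hnn, hu⟩ := key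
      refine ⟨⟨fun t ht => lt_trans (mul_pos (hσ0.trans_le (hrange t ht).1)
        (Real.sqrt_pos.2 (by linarith))) (hS t ht), hnn⟩, ?_⟩
      have hev := (sgm_tendsto A B hγ).eventually (lt_mem_nhds (show A - δ < A by linarith))
      obtain ⟨T, hT⟩ := eventually_atTop.1 hev
      refine ⟨max T 0, le_max_right _ _, fun t ht => ?_⟩
      have ht0 : 0 ≤ t := (le_max_right _ _).trans ht
      have hσ := hT t ((le_max_left _ _).trans ht)
      have hsp : 0 < Real.sqrt (t+1) := Real.sqrt_pos.2 (by linarith)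
      have hsσ : sgm A B γ t < s t / Real.sqrt (t+1) := (lt_div_iff₀ hsp).2 (hS t ht0)
      refine ⟨by linarith [hδε.1], fun x hx hxs => ?_⟩
      have hη0 : 0 ≤ x / Real.sqrt (t+1) := div_nonneg hx hsp.le
      have hr := hrange t ht0
      have l2 : EE ω - EE (sgm A B γ t) ≤ ω - sgm A B γ t := EE_lip (by linarith)
      have m2 : h * (EE ω - EE (sgm A B γ t)) ≤ h * (2 * δ) :=
        mul_le_mul_of_nonneg_left (by linarith) hh.le
      rcases le_or_gt (x / Real.sqrt (t+1)) (sgm A B γ t) with hησ | hησ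
      · have h1 := hu t ht0 x hx ((div_le_iff₀ hsp).1 hησ)
        rw [vv_eta ht0] at h1
        generalize x / Real.sqrt (t+1) = η at *
        generalize sgm A B γ t = σ at *
        have l1 := EE_lip hησ
        have m1 : k * (EE σ - EE η) ≤ k * ω := mul_le_mul_of_nonneg_left (by linarith) hk.le
        have m3 : k * (σ ^ 2 - η ^ 2) ≤ k * ω ^ 2 := mul_le_mul_of_nonneg_left (by nlinarith) hk.le
        linarith [hδε.2]
      · have h1 := hnn t ht0 x hx hxs
        have h2 := mul_le_mul_of_nonneg_left (EE_mono hησ.le) hh.le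
        linarith [hδε.2]
    · intro t ht
      obtain ⟨r1, r2⟩ := hrange t ht.le
      have ht1 : t + 1 ≠ 0 := by linarith
      simp only [div_mul_cancel₀ _ ht1]
      generalize sgm A B γ t = σ at *
      have he : Real.exp (-σ ^ 2 / 4) ≤ 1 := Real.exp_le_one_iff.2 (by nlinarith [sq_nonneg σ])
      have he0 : 0 < Real.exp (-σ ^ 2 / 4) := Real.exp_pos _
      have hks : 0 < k * σ := mul_pos hk (by linarith)
      have hQ : (h - k) * Real.exp (-σ ^ 2 / 4) + -k * σ ≤ h := by
        nlinarith
      have h1 := mul_le_mul_of_nonneg_left hQ (show 0 ≤ A - σ by linarith)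
      have h2 : (A - σ) * h ≤ A * h := by nlinarith
      have := mul_le_mul_of_nonneg_left (h1.trans h2) hγ.le
      linarith
    · intro t ht
      obtain ⟨r1, r2⟩ := hrange t ht.le
      have ht1 : t + 1 ≠ 0 := by linarith
      simp only [div_mul_cancel₀ _ ht1]
      generalize sgm A B γ t = σ at *
      have he : Real.exp (-A ^ 2 / 4) ≤ Real.exp (-σ ^ 2 / 4) := Real.exp_le_exp.2 (by nlinarith)
      have := mul_le_mul_of_nonneg_left he (show 0 ≤ h - k by linarith)
      have h2 := mul_le_mul_of_nonneg_right hγ1 (show 0 ≤ A - σ by linarith)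
      have h3 := mul_le_mul_of_nonneg_left r2.le hk.le
      linarith
    · rw [sgm_zero]; linarith
    · intro x hx hxb
      rw [sgm_zero] at hxb
      have hxσ : x ≤ σ0 := by linarith
      refine le_trans ?_ (hcr x hx (by linarith) (by linarith))
      rw [vv_eta le_rfl, sgm_zero]
      simp only [zero_add, Real.sqrt_one, div_one]
      rw [show A + B = σ0 by simp [hB]]
      have l1 := EE_lip hxσ
      have h2 : (h - k) * (EE σ0 - EE x) ≤ h * σ0 :=
        mul_le_mul (by linarith) (by linarith) (by linarith [EE_mono hxσ]) hh.le
      have h3 : 0 ≤ k * (σ0 ^ 2 - x ^ 2) := mul_nonneg hk.le (by nlinarith)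
      linarith
  exact ⟨(main 1 one_pos).1.1, (main 1 one_pos).1.2, fun ε hε => (main ε hε).2⟩

end

/-- Theorem 1.1: for `h > 0`, `b0 > 0` and `u0 ∈ W^{1,∞}(0,∞)` with `u0 ≥ 0`,
`u0 0 > 0`, `u0 = 0` on `[b0, ∞)`, the solution `(u, s)` of (NSP) satisfies
`s t / √(t+1) → ω` and `sup_{x/√(t+1) ∈ [0,ω]} |u(x,t) - U(x/√(t+1))| → 0`
as `t → ∞`, where `u` is extended by zero for `x > s t` and `(U, ω)` is the
self-similar profile. -/
theorem NSP_convergence_to_self_similar_profile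
    (h b0 ω : ℝ) (hh : 0 < h) (hb0 : 0 < b0)
    (u0 : ℝ → ℝ)
    (hlip : ∃ M : NNReal, LipschitzOnWith M u0 (Set.Ici 0))
    (hbdd : ∃ C : ℝ, ∀ x ∈ Set.Ici (0:ℝ), |u0 x| ≤ C)
    (hpos : ∀ x ∈ Set.Ici (0:ℝ), 0 ≤ u0 x)
    (hu00 : 0 < u0 0)
    (hzero : ∀ x ∈ Set.Ici b0, u0 x = 0)
    (u : ℝ → ℝ → ℝ) (s : ℝ → ℝ)
    (hsol : IsClassicalSolNSP h b0 u0 u s)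
    (hω : 0 < ω) (hroot : h = ω / 2 * Real.exp (ω ^ 2 / 4))
    (U : ℝ → ℝ)
    (hU : ∀ η, U η = h * ∫ σ in η..ω, Real.exp (-σ ^ 2 / 4)) :
    Filter.Tendsto (fun t => s t / Real.sqrt (t + 1)) Filter.atTop (nhds ω) ∧
    (∀ ε > (0:ℝ), ∃ T : ℝ, ∀ t ≥ T, ∀ x, 0 ≤ x → x / Real.sqrt (t + 1) ≤ ω →
      |(if x ≤ s t then u x t else 0) - U (x / Real.sqrt (t + 1))| < ε) := by
  have hinit := sol_init hb0 hlip hsol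
  obtain ⟨C, hC⟩ := hbdd
  have hC0 : 0 ≤ C := (abs_nonneg _).trans (hC 0 (by simp))
  obtain ⟨r, hr, hcr⟩ : ∃ r > 0, ∀ x, 0 ≤ x → x ≤ r → u0 0 / 2 ≤ u0 x := by
    obtain ⟨M, hM⟩ := hlip
    have hc : ContinuousWithinAt u0 (Set.Ici 0) 0 := hM.continuousOn 0 (by simp)
    have hev : ∀ᶠ x in 𝓝[≥] (0:ℝ), u0 0 / 2 < u0 x := hc.eventually (lt_mem_nhds (by linarith))
    obtain ⟨r, hr, hsub⟩ := mem_nhdsGE_iff_exists_Icc_subset.1 hev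
    exact ⟨r, hr, fun x h1 h2 => (hsub ⟨h1, h2⟩).le⟩
  obtain ⟨hspos, hnn, hsub⟩ := sub_final hh hb0 hω hroot hsol
    (fun x h1 h2 => by rw [hinit x h1 h2]; exact hpos x h1) (c := u0 0 / 2) (r := r) (by linarith) hr
    (fun x h1 h2 h3 => by rw [hinit x h1 h2]; exact hcr x h1 h3)
  have hsup := super_final hh hb0 hω hroot hsol hspos (C := C)
    (fun x h1 h2 => by rw [hinit x h1 h2]; exact (le_abs_self _).trans (hC x h1)) hC0
  constructor
  · rw [Metric.tendsto_atTop]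
    intro ε hε
    obtain ⟨T1, _, h1⟩ := hsub (ε / 2) (by linarith)
    obtain ⟨T2, _, h2⟩ := hsup (ε / 2) (by linarith)
    refine ⟨max T1 T2, fun t ht => ?_⟩
    have a1 := (h1 t ((le_max_left _ _).trans ht)).1
    have a2 := (h2 t ((le_max_right _ _).trans ht)).1
    rw [Real.dist_eq, abs_lt]
    constructor <;> linarith
  · intro ε hε
    obtain ⟨η, hη, hηε, hηh⟩ : ∃ η > 0, η < ε ∧ h * η < ε := by
      refine ⟨min (ε / 2) (ε / (2 * h)), by positivity, ?_, ?_⟩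
      · linarith [min_le_left (ε / 2) (ε / (2 * h))]
      · have := mul_le_mul_of_nonneg_left (min_le_right (ε / 2) (ε / (2 * h))) hh.le
        have h2 : h * (ε / (2 * h)) = ε / 2 := by field_simp
        linarith
    obtain ⟨T1, hT1, h1⟩ := hsub η hη
    obtain ⟨T2, _, h2⟩ := hsup η hη
    refine ⟨max T1 T2, fun t ht x hx hxω => ?_⟩
    have a1 := h1 t ((le_max_left _ _).trans ht)
    have a2 := h2 t ((le_max_right _ _).trans ht)
    have ht0 : 0 ≤ t := hT1.trans ((le_max_left _ _).trans ht)
    have hsp : 0 < Real.sqrt (t+1) := Real.sqrt_pos.2 (by linarith)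
    rw [hU, EE_integral]
    split_ifs with hxs
    · have b1 := a1.2 x hx hxs
      have b2 := a2.2 x hx hxs
      rw [abs_lt]
      constructor <;> linarith
    · push Not at hxs
      have b1 : s t / Real.sqrt (t+1) ≤ x / Real.sqrt (t+1) :=
        div_le_div_of_nonneg_right hxs.le hsp.le
      have b2 := EE_lip hxω
      have b3 := EE_mono hxω
      have b4 : 0 ≤ h * (EE ω - EE (x / Real.sqrt (t+1))) := mul_nonneg hh.le (by linarith)
      have b5 : h * (EE ω - EE (x / Real.sqrt (t+1))) ≤ h * η :=
        mul_le_mul_of_nonneg_left (by linarith [a1.1]) hh.le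
      rw [abs_lt]
      constructor <;> linarith
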